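/- Let α ∈ (1,2), T > 0, let a : [0,T] → ℝ be continuous, set L := max_{t∈[0,T]} |a(t)|, and for t ∈ [0,T] define a₋(t) := min_{τ∈[0,t]} a(τ). Let y₁, y₂ : [0,T] → ℝ be continuous and satisfy yₖ(t) = y_{k,0} + y_{k,1} t + (1/Γ(α)) ∫₀ᵗ (t−s)^{α−1} a(s) yₖ(s) ds for k = 1, 2, with y_{1,0} ≤ y_{2,0} and y_{1,1} ≤ y_{2,1}. Suppose T* ∈ (0,T] is such that for all t ∈ [0,T*]: E_{α,α}(−L t^α) > 0 and either [(y_{2,0} − y_{1,0}) E_{α,1}(−L t^α) + (y_{2,1} − y_{1,1}) t E_{α,2}(−L t^α) > 0] or [y_{1,0} = y_{2,0}, y_{1,1} < y_{2,1}, and E_{α,2}(−L t^α) > 0]. Then for all t ∈ [0,T*]: |y₂(t) − y₁(t)| ≥ |y_{2,0} − y_{1,0}| · E_{α,1}(a₋(t) t^α) + |y_{2,1} − y_{1,1}| · t E_{α,2}(a₋(t) t^α). -/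

import Mathlib

/-- The two-parameter Mittag-Leffler function `E_{α,β}(z) = ∑ₖ zᵏ / Γ(αk + β)`. -/
noncomputable def mlE (α β z : ℝ) : ℝ := ∑' k : ℕ, z ^ k / Real.Gamma (α * k + β)

/-!
For a constant `c`, the difference `u = y₂ - y₁` satisfies the variation of constants formula
`u(t) = w_c(t) + ∫₀ᵗ K_c(t - s) (a(s) - c) u(s) ds`, where `w_c` solves `D^α w = c w` with the
initial data of `u` and `K_c(x) = x^(α-1) E_{α,α}(c x^α)`. For `c = -L`, the hypotheses make `w_c`,
`K_c` and `a - c` nonnegative, so the negative part of `u` satisfies a homogeneous fractional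
Gronwall inequality and `u ≥ 0`. For `-L ≤ c ≤ 0` the number `c x^α` equals `-L s^α` for some
`s ≤ x`, so the kernel stays nonnegative for every `c ≥ -L`. Taking `c = a₋(t)`, the integral is
then nonnegative and `u(t) ≥ w_c(t)`.
-/

open Set Filter MeasureTheory ProbabilityTheory

/-! ### The Mittag-Leffler function -/

section MittagLeffler

variable {α β : ℝ}

lemma rpow_mul_exp_neg_le_Gamma {R x : ℝ} (hR : 0 ≤ R) (hx : 1 ≤ x) :
    R ^ (x - 1) * Real.exp (-R) ≤ Real.Gamma x := by
  have hint := Real.GammaIntegral_convergent (zero_lt_one.trans_le hx)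
  have hsub : Ioi R ⊆ Ioi (0 : ℝ) := Ioi_subset_Ioi hR
  calc R ^ (x - 1) * Real.exp (-R)
      = ∫ s in Ioi R, Real.exp (-s) * R ^ (x - 1) := by
        rw [integral_mul_const, integral_exp_neg_Ioi, mul_comm]
    _ ≤ ∫ s in Ioi R, Real.exp (-s) * s ^ (x - 1) := by
        refine setIntegral_mono_on ((integrableOn_exp_neg_Ioi R).mul_const _)
          (hint.mono_set hsub) measurableSet_Ioi fun s hs => ?_
        have : R ≤ s := hs.le
        gcongr
    _ ≤ ∫ s in Ioi 0, Real.exp (-s) * s ^ (x - 1) :=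
        setIntegral_mono_set hint
          ((ae_restrict_iff' measurableSet_Ioi).2 <| .of_forall fun s hs =>
            mul_nonneg (Real.exp_pos _).le (Real.rpow_nonneg (le_of_lt hs) _))
          hsub.eventuallyLE
    _ = Real.Gamma x := (Real.Gamma_eq_integral (zero_lt_one.trans_le hx)).symm

lemma summable_mlE (hα : 0 < α) (β z : ℝ) :
    Summable fun k : ℕ => z ^ k / Real.Gamma (α * k + β) := by
  -- Choosing `R ^ α = |z| + 1` in the bound on `Γ` makes the series geometric with this ratio.
  set q := |z| / (|z| + 1) with hq
  have hQ : 0 < |z| + 1 := by positivity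
  have hq1 : q < 1 := (div_lt_one hQ).2 (lt_add_one _)
  set R := (|z| + 1) ^ α⁻¹
  have hR0 : 0 < R := by positivity
  have hRα : R ^ α = |z| + 1 := Real.rpow_inv_rpow hQ.le hα.ne'
  refine Summable.of_norm_bounded_eventually_nat
    ((summable_geometric_of_lt_one (by positivity) hq1).mul_left
      (R ^ (1 - β) * Real.exp R)) ?_
  have hlarge : ∀ᶠ k : ℕ in atTop, 1 ≤ α * k + β :=
    (tendsto_atTop_add_const_right _ _
      (tendsto_natCast_atTop_atTop.const_mul_atTop hα)).eventually_ge_atTop 1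
  filter_upwards [hlarge] with k hk
  have hΓ := rpow_mul_exp_neg_le_Gamma hR0.le hk
  have hpow : R ^ (α * k + β - 1) * Real.exp (-R)
      = (|z| + 1) ^ k / (R ^ (1 - β) * Real.exp R) := by
    rw [show α * k + β - 1 = α * k - (1 - β) by ring, Real.rpow_sub hR0,
      Real.rpow_mul_natCast hR0.le, hRα, Real.exp_neg]
    field_simp
  rw [hpow] at hΓ
  rw [norm_div, norm_pow, Real.norm_eq_abs, Real.norm_eq_abs,
    abs_of_pos (Real.Gamma_pos_of_pos (zero_lt_one.trans_le hk))]
  calc |z| ^ k / Real.Gamma (α * k + β)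
      ≤ |z| ^ k / ((|z| + 1) ^ k / (R ^ (1 - β) * Real.exp R)) := by gcongr
    _ = R ^ (1 - β) * Real.exp R * q ^ k := by rw [hq, div_pow]; field_simp

lemma hasSum_mlE (hα : 0 < α) (β z : ℝ) :
    HasSum (fun k : ℕ => z ^ k / Real.Gamma (α * k + β)) (mlE α β z) :=
  (summable_mlE hα β z).hasSum

lemma continuous_mlE (hα : 0 < α) (β : ℝ) : Continuous (mlE α β) := by
  refine continuous_iff_continuousAt.2 fun z₀ => ?_
  refine ContinuousOn.continuousAt (s := Metric.ball 0 (|z₀| + 1)) ?_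
    (Metric.isOpen_ball.mem_nhds (by simp))
  refine continuousOn_tsum (fun k => by fun_prop) (summable_mlE hα β (|z₀| + 1)).norm
    fun k z hz => ?_
  have hz' : |z| ≤ |z₀| + 1 := by simpa using (Metric.mem_ball.1 hz).le
  rw [norm_div, norm_div, norm_pow, norm_pow, Real.norm_eq_abs z,
    Real.norm_of_nonneg (by positivity : 0 ≤ |z₀| + 1)]
  gcongr

lemma mlE_nonneg (hα : 0 ≤ α) (hβ : 0 < β) {z : ℝ} (hz : 0 ≤ z) : 0 ≤ mlE α β z :=
  tsum_nonneg fun k =>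
    div_nonneg (pow_nonneg hz k) (Real.Gamma_pos_of_pos (by positivity)).le

lemma mlE_mul_rpow_nonneg_of_le (hα : 0 < α) (hβ : 0 < β) {m c T t : ℝ}
    (hm : ∀ t ∈ Icc 0 T, 0 ≤ mlE α β (m * t ^ α)) (hmc : m ≤ c) (ht : t ∈ Icc 0 T) :
    0 ≤ mlE α β (c * t ^ α) := by
  have htα : 0 ≤ t ^ α := Real.rpow_nonneg ht.1 _
  rcases le_total 0 c with hc | hc
  · exact mlE_nonneg hα.le hβ (by positivity)
  · obtain ⟨s, hs, hsc⟩ : c * t ^ α ∈ (fun s => m * s ^ α) '' Icc 0 t := by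
      refine intermediate_value_Icc' ht.1
        ((Real.continuous_rpow_const hα.le).const_mul m).continuousOn ⟨?_, ?_⟩
      · exact mul_le_mul_of_nonneg_right hmc htα
      · simpa only [Real.zero_rpow hα.ne', mul_zero] using mul_nonpos_of_nonpos_of_nonneg hc htα
    rw [← show m * s ^ α = c * t ^ α from hsc]
    exact hm s ⟨hs.1, hs.2.trans ht.2⟩

end MittagLeffler

section Volterra

variable {k f g : ℝ → ℝ} {t : ℝ}

/-- The one-sided convolution `∫₀ᵗ k(t - s) f(s) ds` of a kernel `k` with `f`. -/
noncomputable def volterra (k f : ℝ → ℝ) (t : ℝ) : ℝ := ∫ s in (0 : ℝ)..t, k (t - s) * f s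

lemma volterra_congr (ht : 0 ≤ t) (h : EqOn f g (Ioo 0 t)) : volterra k f t = volterra k g t :=
  intervalIntegral.integral_congr_Ioo_of_le ht fun s hs => by simp only [h hs]

lemma volterra_const_mul (c : ℝ) (k f : ℝ → ℝ) (t : ℝ) :
    volterra k (fun s => c * f s) t = c * volterra k f t := by
  simp only [volterra, mul_left_comm _ c, intervalIntegral.integral_const_mul]

lemma intervalIntegrable_volterra (hk : IntervalIntegrable k volume 0 t)
    (ht : 0 ≤ t) (hf : ContinuousOn f (Icc 0 t)) :
    IntervalIntegrable (fun s => k (t - s) * f s) volume 0 t := by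
  have hk' : IntervalIntegrable (fun s => k (t - s)) volume 0 t := by
    simpa using (hk.comp_sub_left t).symm
  exact hk'.mul_continuousOn (by rwa [uIcc_of_le ht])

lemma volterra_add (hk : IntervalIntegrable k volume 0 t) (ht : 0 ≤ t)
    (hf : ContinuousOn f (Icc 0 t)) (hg : ContinuousOn g (Icc 0 t)) :
    volterra k (fun s => f s + g s) t = volterra k f t + volterra k g t := by
  simp only [volterra, mul_add]
  exact intervalIntegral.integral_add (intervalIntegrable_volterra hk ht hf)
    (intervalIntegrable_volterra hk ht hg)

lemma volterra_sub (hk : IntervalIntegrable k volume 0 t) (ht : 0 ≤ t)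
    (hf : ContinuousOn f (Icc 0 t)) (hg : ContinuousOn g (Icc 0 t)) :
    volterra k (fun s => f s - g s) t = volterra k f t - volterra k g t := by
  simp only [volterra, mul_sub]
  exact intervalIntegral.integral_sub (intervalIntegrable_volterra hk ht hf)
    (intervalIntegrable_volterra hk ht hg)

lemma volterra_nonneg (ht : 0 ≤ t) (hk : ∀ x ∈ Icc 0 t, 0 ≤ k x)
    (hf : ∀ s ∈ Icc 0 t, 0 ≤ f s) : 0 ≤ volterra k f t :=
  intervalIntegral.integral_nonneg ht fun s hs =>
    mul_nonneg (hk _ ⟨sub_nonneg.2 hs.2, sub_le_self _ hs.1⟩) (hf s hs)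

lemma volterra_le_volterra (hk : IntervalIntegrable k volume 0 t) (ht : 0 ≤ t)
    (hk₀ : ∀ x ∈ Icc 0 t, 0 ≤ k x) (hf : ContinuousOn f (Icc 0 t)) (hg : ContinuousOn g (Icc 0 t))
    (hfg : ∀ s ∈ Icc 0 t, f s ≤ g s) : volterra k f t ≤ volterra k g t :=
  intervalIntegral.integral_mono_on ht (intervalIntegrable_volterra hk ht hf)
    (intervalIntegrable_volterra hk ht hg) fun s hs =>
      mul_le_mul_of_nonneg_left (hfg s hs) (hk₀ _ ⟨sub_nonneg.2 hs.2, sub_le_self _ hs.1⟩)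

lemma volterra_le_const_mul_volterra {l : ℝ → ℝ} {C : ℝ} (hk : IntervalIntegrable k volume 0 t)
    (hl : IntervalIntegrable l volume 0 t) (ht : 0 ≤ t) (hkl : ∀ x ∈ Icc 0 t, k x ≤ C * l x)
    (hf : ContinuousOn f (Icc 0 t)) (hf₀ : ∀ s ∈ Icc 0 t, 0 ≤ f s) :
    volterra k f t ≤ C * volterra l f t := by
  rw [volterra, volterra, ← intervalIntegral.integral_const_mul]
  refine intervalIntegral.integral_mono_on ht (intervalIntegrable_volterra hk ht hf)
    ((intervalIntegrable_volterra hl ht hf).const_mul C) fun s hs => ?_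
  rw [← mul_assoc]
  exact mul_le_mul_of_nonneg_right (hkl _ ⟨sub_nonneg.2 hs.2, sub_le_self _ hs.1⟩) (hf₀ s hs)

end Volterra

/-! ### The Riemann–Liouville integral -/

section RiemannLiouville

variable {α β p q : ℝ}

/-- The causal power kernel `x₊^(α-1) / Γ(α)`, so that `volterra (rlKernel α)` is the
Riemann–Liouville integral of order `α`. It vanishes on `x ≤ 0`, also at the jump for `α = 1`; the
convolution of `rlKernel p` and `rlKernel q` is then `rlKernel (p + q)` on the whole line. -/
noncomputable def rlKernel (α : ℝ) : ℝ → ℝ :=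
  (Ioi 0).indicator fun x => x ^ (α - 1) / Real.Gamma α

lemma rlKernel_of_pos {x : ℝ} (hx : 0 < x) : rlKernel α x = x ^ (α - 1) / Real.Gamma α :=
  indicator_of_mem hx _

lemma rlKernel_of_nonpos {x : ℝ} (hx : x ≤ 0) : rlKernel α x = 0 :=
  indicator_of_notMem (notMem_Ioi.2 hx) _

lemma rlKernel_nonneg (hα : 0 < α) (x : ℝ) : 0 ≤ rlKernel α x :=
  indicator_nonneg (fun _ hx =>
    div_nonneg (Real.rpow_nonneg (le_of_lt hx) _) (Real.Gamma_pos_of_pos hα).le) x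

lemma measurable_rlKernel (α : ℝ) : Measurable (rlKernel α) :=
  Measurable.indicator (by fun_prop) measurableSet_Ioi

lemma intervalIntegrable_rlKernel (hα : 0 < α) (a b : ℝ) :
    IntervalIntegrable (rlKernel α) volume a b := by
  have h : IntervalIntegrable (fun x : ℝ => x ^ (α - 1) / Real.Gamma α) volume a b :=
    (intervalIntegral.intervalIntegrable_rpow' (by linarith)).div_const _
  rw [intervalIntegrable_iff] at h ⊢
  exact h.indicator measurableSet_Ioi

lemma volterra_rlKernel {f : ℝ → ℝ} {t : ℝ} (ht : 0 ≤ t) :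
    volterra (rlKernel α) f t
      = 1 / Real.Gamma α * ∫ s in (0 : ℝ)..t, (t - s) ^ (α - 1) * f s := by
  rw [volterra, ← intervalIntegral.integral_const_mul]
  refine intervalIntegral.integral_congr_Ioo_of_le ht fun s hs => ?_
  simp only [rlKernel_of_pos (sub_pos.2 hs.2)]
  ring

lemma integral_rpow_mul_sub_rpow (hp : 0 < p) (hq : 0 < q) {x : ℝ} (hx : 0 < x) :
    ∫ s in (0 : ℝ)..x, s ^ (p - 1) * (x - s) ^ (q - 1) = x ^ (p + q - 1) * beta p q := by
  have h := Complex.betaIntegral_scaled p q hx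
  have hbeta : Complex.betaIntegral p q = (beta p q : ℝ) := by
    rw [Complex.betaIntegral_eq_Gamma_mul_div _ _ (by simpa) (by simpa), beta]
    simp [← Complex.Gamma_ofReal]
  have hcast : ∀ s ∈ uIcc 0 x, (s : ℂ) ^ ((p : ℂ) - 1) * ((x : ℂ) - s) ^ ((q : ℂ) - 1)
      = ((s ^ (p - 1) * (x - s) ^ (q - 1) : ℝ) : ℂ) := by
    intro s hs
    rw [uIcc_of_le hx.le] at hs
    push_cast [Complex.ofReal_cpow hs.1, Complex.ofReal_cpow (sub_nonneg.2 hs.2)]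
    rfl
  rw [intervalIntegral.integral_congr hcast, intervalIntegral.integral_ofReal, hbeta] at h
  apply Complex.ofReal_injective
  push_cast [h, Complex.ofReal_cpow hx.le]
  rfl

lemma volterra_rlKernel_rlKernel (hp : 0 < p) (hq : 0 < q) {x : ℝ} (hx : 0 < x) :
    volterra (rlKernel p) (rlKernel q) x = rlKernel (p + q) x := by
  have hΓp := (Real.Gamma_pos_of_pos hp).ne'
  have hΓq := (Real.Gamma_pos_of_pos hq).ne'
  have hintegrand : EqOn (fun s => rlKernel p (x - s) * rlKernel q s)
      (fun s => (Real.Gamma q * Real.Gamma p)⁻¹ * (s ^ (q - 1) * (x - s) ^ (p - 1)))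
      (Ioo 0 x) := fun s hs => by
    simp only [rlKernel_of_pos hs.1, rlKernel_of_pos (sub_pos.2 hs.2)]
    field_simp
  rw [volterra, intervalIntegral.integral_congr_Ioo_of_le hx.le hintegrand,
    intervalIntegral.integral_const_mul, integral_rpow_mul_sub_rpow hq hp hx,
    rlKernel_of_pos hx, beta, add_comm q p]
  field_simp

lemma integral_rlKernel_mul_rlKernel (hp : 0 < p) (hq : 0 < q) (x : ℝ) :
    ∫ s, rlKernel p (x - s) * rlKernel q s = rlKernel (p + q) x := by
  have hsupp : ∀ s ∉ Ioc 0 x, rlKernel p (x - s) * rlKernel q s = 0 := by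
    intro s hs
    rcases le_or_gt s 0 with hs0 | hs0
    · rw [rlKernel_of_nonpos hs0, mul_zero]
    · have hxs : x < s := not_le.1 fun h => hs ⟨hs0, h⟩
      rw [rlKernel_of_nonpos (sub_nonpos.2 hxs.le), zero_mul]
  rw [← setIntegral_eq_integral_of_forall_compl_eq_zero hsupp]
  rcases le_or_gt x 0 with hx | hx
  · rw [Ioc_eq_empty hx.not_gt, setIntegral_empty, rlKernel_of_nonpos hx]
  · rw [← intervalIntegral.integral_of_le hx.le]
    exact volterra_rlKernel_rlKernel hp hq hx

lemma integral_rlKernel_sub_mul_rlKernel_sub (hp : 0 < p) (hq : 0 < q) (t r : ℝ) :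
    ∫ s, rlKernel p (t - s) * rlKernel q (s - r) = rlKernel (p + q) (t - r) := by
  rw [← integral_rlKernel_mul_rlKernel hp hq (t - r),
    ← integral_sub_right_eq_self (fun s => rlKernel p (t - r - s) * rlKernel q s) r]
  simp only [sub_sub_sub_cancel_right]

lemma integrable_rlKernel_sub_mul_rlKernel_sub (hp : 0 < p) (hq : 0 < q) (t r : ℝ) :
    Integrable fun s => rlKernel p (t - s) * rlKernel q (s - r) := by
  rcases le_or_gt t r with htr | htr
  · have hzero : (fun s => rlKernel p (t - s) * rlKernel q (s - r)) = 0 := by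
      funext s
      rcases le_total s r with hs | hs
      · simp [rlKernel_of_nonpos (sub_nonpos.2 hs)]
      · simp [rlKernel_of_nonpos (sub_nonpos.2 (htr.trans hs))]
    rw [hzero]
    exact integrable_zero _ _ _
  · refine Integrable.of_integral_ne_zero ?_
    rw [integral_rlKernel_sub_mul_rlKernel_sub hp hq, rlKernel_of_pos (sub_pos.2 htr)]
    have := Real.Gamma_pos_of_pos (add_pos hp hq)
    have := sub_pos.2 htr
    positivity

lemma volterra_rlKernel_eq_integral_Ioc {f : ℝ → ℝ} {s t : ℝ} (hs : 0 ≤ s) (hst : s ≤ t) :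
    volterra (rlKernel α) f s = ∫ r in Ioc 0 t, rlKernel α (s - r) * f r := by
  rw [volterra, intervalIntegral.integral_of_le hs]
  refine (setIntegral_eq_of_subset_of_forall_sdiff_eq_zero measurableSet_Ioc
    (Ioc_subset_Ioc_right hst) fun r hr => ?_).symm
  have hsr : s < r := not_le.1 fun h => hr.2 ⟨hr.1.1, h⟩
  rw [rlKernel_of_nonpos (sub_nonpos.2 hsr.le), zero_mul]

lemma integrable_prod_rlKernel (hp : 0 < p) (hq : 0 < q) {f : ℝ → ℝ} {t : ℝ} (ht : 0 ≤ t)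
    (hf : ContinuousOn f (Icc 0 t)) :
    Integrable (Function.uncurry fun s r => rlKernel p (t - s) * (rlKernel q (s - r) * f r))
      (volume.prod (volume.restrict (Ioc 0 t))) := by
  have hfm : AEStronglyMeasurable f (volume.restrict (Ioc 0 t)) :=
    (hf.mono Ioc_subset_Icc_self).aestronglyMeasurable measurableSet_Ioc
  have hmeas : AEStronglyMeasurable
      (Function.uncurry fun s r => rlKernel p (t - s) * (rlKernel q (s - r) * f r))
      (volume.prod (volume.restrict (Ioc 0 t))) :=
    ((measurable_rlKernel p).comp (by fun_prop)).aestronglyMeasurable.mul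
      (((measurable_rlKernel q).comp (by fun_prop)).aestronglyMeasurable.mul hfm.comp_snd)
  refine (integrable_prod_iff' hmeas).2 ⟨.of_forall fun r => ?_, ?_⟩
  · simpa only [Function.uncurry, mul_assoc] using
      (integrable_rlKernel_sub_mul_rlKernel_sub hp hq t r).mul_const (f r)
  · have hnorm : ∀ r, ∫ s, ‖rlKernel p (t - s) * (rlKernel q (s - r) * f r)‖
        = rlKernel (p + q) (t - r) * ‖f r‖ := fun r => by
      simp only [norm_mul, Real.norm_of_nonneg (rlKernel_nonneg hp _),
        Real.norm_of_nonneg (rlKernel_nonneg hq _), ← mul_assoc]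
      rw [integral_mul_const, integral_rlKernel_sub_mul_rlKernel_sub hp hq]
    simp only [Function.uncurry, hnorm]
    exact (intervalIntegrable_volterra (intervalIntegrable_rlKernel (add_pos hp hq) 0 t) ht
      hf.norm).1

lemma volterra_rlKernel_volterra_rlKernel (hp : 0 < p) (hq : 0 < q) {f : ℝ → ℝ} {t : ℝ}
    (ht : 0 ≤ t) (hf : ContinuousOn f (Icc 0 t)) :
    volterra (rlKernel p) (volterra (rlKernel q) f) t = volterra (rlKernel (p + q)) f t := by
  let F : ℝ → ℝ → ℝ := fun s r => rlKernel p (t - s) * (rlKernel q (s - r) * f r)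
  have hsupp : ∀ s ∉ Ioc 0 t, ∫ r in Ioc 0 t, F s r = 0 := by
    refine fun s hs => setIntegral_eq_zero_of_forall_eq_zero fun r hr => ?_
    rcases le_or_gt s 0 with hs0 | hs0
    · simp [F, rlKernel_of_nonpos (sub_nonpos.2 (hs0.trans hr.1.le))]
    · have hts : t < s := not_le.1 fun h => hs ⟨hs0, h⟩
      simp [F, rlKernel_of_nonpos (sub_nonpos.2 hts.le)]
  calc volterra (rlKernel p) (volterra (rlKernel q) f) t
      = ∫ s in Ioc 0 t, ∫ r in Ioc 0 t, F s r := by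
        rw [volterra, intervalIntegral.integral_of_le ht]
        refine setIntegral_congr_fun measurableSet_Ioc fun s hs => ?_
        simp only [F, integral_const_mul, volterra_rlKernel_eq_integral_Ioc hs.1.le hs.2]
    _ = ∫ s, ∫ r in Ioc 0 t, F s r := setIntegral_eq_integral_of_forall_compl_eq_zero hsupp
    _ = ∫ r in Ioc 0 t, ∫ s, F s r := integral_integral_swap (integrable_prod_rlKernel hp hq ht hf)
    _ = ∫ r in Ioc 0 t, rlKernel (p + q) (t - r) * f r := by
        simp only [F, ← mul_assoc, integral_mul_const,
          integral_rlKernel_sub_mul_rlKernel_sub hp hq]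
    _ = volterra (rlKernel (p + q)) f t := by rw [volterra, intervalIntegral.integral_of_le ht]

end RiemannLiouville

/-! ### Mittag-Leffler kernels and variation of constants -/

section MittagLefflerKernel

variable {α β c t u₀ u₁ : ℝ} {f F u h : ℝ → ℝ}

/-- The causal kernel `x^(β-1) E_{α,β}(c x^α)` on `x > 0`. For `β = α` it is the resolvent kernel of
`D^α u = c u`; for `β = 1` and `β = 2` it is the solution of that equation with initial data
`(1, 0)` and `(0, 1)`. -/
noncomputable def mlKernel (α β c : ℝ) : ℝ → ℝ :=
  (Ioi 0).indicator fun x => x ^ (β - 1) * mlE α β (c * x ^ α)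

lemma mlKernel_of_pos {x : ℝ} (hx : 0 < x) :
    mlKernel α β c x = x ^ (β - 1) * mlE α β (c * x ^ α) :=
  indicator_of_mem hx _

lemma mlKernel_of_nonpos {x : ℝ} (hx : x ≤ 0) : mlKernel α β c x = 0 :=
  indicator_of_notMem (notMem_Ioi.2 hx) _

lemma hasSum_mlKernel (hα : 0 < α) (β c x : ℝ) :
    HasSum (fun n : ℕ => c ^ n * rlKernel (α * n + β) x) (mlKernel α β c x) := by
  rcases le_or_gt x 0 with hx | hx
  · simp only [rlKernel_of_nonpos hx, mlKernel_of_nonpos hx, mul_zero, hasSum_zero]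
  · rw [mlKernel_of_pos hx]
    refine ((hasSum_mlE hα β (c * x ^ α)).mul_left (x ^ (β - 1))).congr_fun fun n => ?_
    rw [rlKernel_of_pos hx, add_sub_assoc, Real.rpow_add hx, Real.rpow_mul_natCast hx.le, mul_pow]
    ring

lemma mlKernel_nonneg {T : ℝ} (h : ∀ x ∈ Icc 0 T, 0 ≤ mlE α β (c * x ^ α)) :
    ∀ x ∈ Icc 0 T, 0 ≤ mlKernel α β c x := fun x hx =>
  indicator_apply_nonneg fun _ => mul_nonneg (Real.rpow_nonneg hx.1 _) (h x hx)

lemma mlKernel_eq_rlKernel_mul (hβ : 0 < β) (x : ℝ) :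
    mlKernel α β c x = rlKernel β x * (Real.Gamma β * mlE α β (c * x ^ α)) := by
  rcases le_or_gt x 0 with hx | hx
  · rw [mlKernel_of_nonpos hx, rlKernel_of_nonpos hx, zero_mul]
  · have := (Real.Gamma_pos_of_pos hβ).ne'
    rw [mlKernel_of_pos hx, rlKernel_of_pos hx]
    field_simp

lemma continuous_mlE_mul_rpow (hα : 0 < α) (β c : ℝ) :
    Continuous fun x : ℝ => mlE α β (c * x ^ α) :=
  (continuous_mlE hα β).comp (continuous_const.mul (Real.continuous_rpow_const hα.le))

lemma intervalIntegrable_mlKernel (hα : 0 < α) (hβ : 0 < β) (c a b : ℝ) :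
    IntervalIntegrable (mlKernel α β c) volume a b := by
  rw [funext (mlKernel_eq_rlKernel_mul hβ)]
  exact (intervalIntegrable_rlKernel hβ a b).mul_continuousOn
    (continuous_const.mul (continuous_mlE_mul_rpow hα β c)).continuousOn

lemma exists_mlKernel_le (hα : 0 < α) (hβ : 0 < β) (c T : ℝ) :
    ∃ C, 0 ≤ C ∧ ∀ x ∈ Icc 0 T, mlKernel α β c x ≤ C * rlKernel β x := by
  obtain ⟨C, hC⟩ := (isCompact_Icc (a := (0 : ℝ)) (b := T)).exists_bound_of_continuousOn
    (continuous_const.mul (continuous_mlE_mul_rpow hα β c) :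
      Continuous fun x => Real.Gamma β * mlE α β (c * x ^ α)).continuousOn
  refine ⟨max C 0, le_max_right _ _, fun x hx => ?_⟩
  rw [mlKernel_eq_rlKernel_mul hβ, mul_comm]
  exact mul_le_mul_of_nonneg_right
    ((le_abs_self _).trans ((hC x hx).trans (le_max_left _ _))) (rlKernel_nonneg hβ x)

lemma hasSum_volterra_mlKernel (hα : 0 < α) (hβ : 0 < β) (c : ℝ) (ht : 0 ≤ t)
    (hf : ContinuousOn f (Icc 0 t)) :
    HasSum (fun n : ℕ => c ^ n * volterra (rlKernel (α * n + β)) f t)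
      (volterra (mlKernel α β c) f t) := by
  have hpos (n : ℕ) : 0 < α * n + β := by positivity
  have hbound (s : ℝ) :
      HasSum (fun n : ℕ => |c| ^ n * rlKernel (α * n + β) (t - s) * |f s|)
        (mlKernel α β |c| (t - s) * |f s|) :=
    (hasSum_mlKernel hα β |c| (t - s)).mul_right _
  simp only [volterra, ← intervalIntegral.integral_const_mul, ← mul_assoc]
  refine intervalIntegral.hasSum_integral_of_dominated_convergence
    (fun n s => |c| ^ n * rlKernel (α * n + β) (t - s) * |f s|) (fun n => ?_)
    (fun n => .of_forall fun s _ => ?_) (.of_forall fun s _ => (hbound s).summable) ?_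
    (.of_forall fun s _ => (hasSum_mlKernel hα β c (t - s)).mul_right _)
  · simp only [mul_assoc]
    exact (intervalIntegrable_iff.1 ((intervalIntegrable_volterra
      (intervalIntegrable_rlKernel (hpos n) 0 t) ht hf).const_mul (c ^ n))).aestronglyMeasurable
  · rw [norm_mul, norm_mul, norm_pow, Real.norm_of_nonneg (rlKernel_nonneg (hpos n) _)]
    rfl
  · simp only [(hbound _).tsum_eq]
    exact intervalIntegrable_volterra (intervalIntegrable_mlKernel hα hβ _ 0 t) ht hf.abs

lemma mlKernel_eq_rlKernel_add (hα : 0 < α) (hβ : 1 ≤ β) (c : ℝ) (ht : 0 < t) :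
    mlKernel α β c t = rlKernel β t + c * volterra (mlKernel α α c) (rlKernel β) t := by
  have hβ₀ : 0 < β := zero_lt_one.trans_le hβ
  have hcont : Continuous fun s : ℝ => s ^ (β - 1) / Real.Gamma β :=
    (Real.continuous_rpow_const (sub_nonneg.2 hβ)).div_const _
  have hβcongr (k : ℝ → ℝ) :
      volterra k (fun s : ℝ => s ^ (β - 1) / Real.Gamma β) t = volterra k (rlKernel β) t :=
    volterra_congr ht.le fun s hs => (rlKernel_of_pos hs.1).symm
  have hconv := (hasSum_volterra_mlKernel hα hα c ht.le hcont.continuousOn).mul_left c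
  simp only [hβcongr] at hconv
  have hser := (hasSum_nat_add_iff' 1).2 (hasSum_mlKernel hα β c t)
  simp only [Finset.sum_range_one, pow_zero, one_mul, Nat.cast_zero, mul_zero, zero_add] at hser
  refine sub_eq_iff_eq_add'.1 (hser.unique (hconv.congr_fun fun n => ?_))
  rw [volterra_rlKernel_rlKernel (by positivity) hβ₀ ht, pow_succ']
  push_cast
  ring_nf

lemma volterra_mlKernel_eq_add (hα : 0 < α) (c : ℝ) (ht : 0 ≤ t)
    (hf : ContinuousOn f (Icc 0 t)) (hF : ContinuousOn F (Icc 0 t))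
    (hfF : ∀ s ∈ Icc 0 t, F s = volterra (rlKernel α) f s) :
    volterra (mlKernel α α c) f t = F t + c * volterra (mlKernel α α c) F t := by
  have hserF := (hasSum_volterra_mlKernel hα hα c ht hF).mul_left c
  have hserf := (hasSum_nat_add_iff' 1).2 (hasSum_volterra_mlKernel hα hα c ht hf)
  simp only [Finset.sum_range_one, pow_zero, one_mul, Nat.cast_zero, mul_zero, zero_add,
    ← hfF t (right_mem_Icc.2 ht)] at hserf
  refine sub_eq_iff_eq_add'.1 (hserf.unique (hserF.congr_fun fun n => ?_))
  rw [volterra_congr ht fun s hs => hfF s (Ioo_subset_Icc_self hs),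
    volterra_rlKernel_volterra_rlKernel (by positivity) hα ht hf, pow_succ']
  push_cast
  ring_nf

/-- The solution of `D^α u = c u`, `u(0) = u₀`, `u'(0) = u₁` for a constant coefficient `c`. -/
noncomputable def homogeneousSolution (α c u₀ u₁ t : ℝ) : ℝ :=
  u₀ * mlE α 1 (c * t ^ α) + u₁ * (t * mlE α 2 (c * t ^ α))

lemma homogeneousSolution_zero (hα : 0 < α) : homogeneousSolution α c u₀ u₁ 0 = u₀ := by
  have hml : mlE α 1 0 = 1 := by
    rw [mlE, tsum_eq_single 0 fun k hk => by simp [hk]]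
    simp
  simp [homogeneousSolution, Real.zero_rpow hα.ne', hml]

lemma homogeneousSolution_eq_add (hα : 0 < α) (ht : 0 ≤ t) :
    homogeneousSolution α c u₀ u₁ t
      = u₀ + u₁ * t + c * volterra (mlKernel α α c) (fun s => u₀ + u₁ * s) t := by
  rcases ht.eq_or_lt with rfl | ht₀
  · simp [homogeneousSolution_zero hα, volterra]
  have hk := intervalIntegrable_mlKernel hα hα c 0 t
  have h₁ : EqOn (fun _ => 1) (rlKernel 1) (Ioi 0) := fun s hs => by
    simp [rlKernel_of_pos (mem_Ioi.1 hs)]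
  have h₂ : EqOn (fun s => s) (rlKernel 2) (Ioi 0) := fun s hs => by
    simp [rlKernel_of_pos (mem_Ioi.1 hs), show (2 : ℝ) - 1 = 1 by norm_num]
  have hsol₁ := mlKernel_eq_rlKernel_add hα le_rfl c ht₀
  have hsol₂ := mlKernel_eq_rlKernel_add hα one_le_two c ht₀
  rw [mlKernel_of_pos ht₀, ← h₁ ht₀, ← volterra_congr ht (h₁.mono Ioo_subset_Ioi_self)] at hsol₁
  rw [mlKernel_of_pos ht₀, ← h₂ ht₀, ← volterra_congr ht (h₂.mono Ioo_subset_Ioi_self)] at hsol₂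
  have hlin : volterra (mlKernel α α c) (fun s => u₀ + u₁ * s) t
      = u₀ * volterra (mlKernel α α c) (fun _ => 1) t
        + u₁ * volterra (mlKernel α α c) (fun s => s) t := by
    rw [volterra_add hk ht continuousOn_const (by fun_prop), volterra_const_mul,
      ← volterra_const_mul u₀]
    simp only [mul_one]
  simp only [sub_self, Real.rpow_zero, one_mul] at hsol₁
  simp only [show (2 : ℝ) - 1 = 1 by norm_num, Real.rpow_one] at hsol₂
  rw [homogeneousSolution, hlin, hsol₁, hsol₂]
  ring

lemma eq_homogeneousSolution_add_volterra (hα : 0 < α) (c : ℝ) (ht : 0 ≤ t)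
    (hu : ContinuousOn u (Icc 0 t)) (hh : ContinuousOn h (Icc 0 t))
    (hsol : ∀ s ∈ Icc 0 t,
      u s = u₀ + u₁ * s + volterra (rlKernel α) (fun r => c * u r + h r) s) :
    u t = homogeneousSolution α c u₀ u₁ t + volterra (mlKernel α α c) h t := by
  have hk := intervalIntegrable_mlKernel hα hα c 0 t
  have hg : ContinuousOn (fun s => u₀ + u₁ * s) (Icc 0 t) := by fun_prop
  have hres := volterra_mlKernel_eq_add hα c (f := fun s => c * u s + h s)
    (F := fun s => u s - (u₀ + u₁ * s)) ht ((hu.const_mul c).add hh) (hu.sub hg)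
    fun s hs => sub_eq_iff_eq_add'.2 (hsol s hs)
  have hl := volterra_add hk ht (hu.const_mul c) hh
  have hr := volterra_sub hk ht hu hg
  rw [volterra_const_mul] at hl
  rw [homogeneousSolution_eq_add hα ht]
  linear_combination hl - hres - c * hr

end MittagLefflerKernel

/-! ### Comparison -/

section Comparison

variable {α T : ℝ}

lemma volterra_rlKernel_le_of_le (hα : 0 < α) {β B t : ℝ} (hβ : 0 < β) (ht : 0 < t) {v : ℝ → ℝ}
    (hv : ContinuousOn v (Icc 0 t)) (hvB : ∀ s ∈ Ioc 0 t, v s ≤ B * rlKernel β s) :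
    volterra (rlKernel α) v t ≤ B * rlKernel (α + β) t := by
  have hint :
      IntervalIntegrable (fun s => rlKernel α (t - s) * (B * rlKernel β s)) volume 0 t := by
    simpa only [sub_zero, mul_left_comm] using
      ((integrable_rlKernel_sub_mul_rlKernel_sub hα hβ t 0).const_mul B).intervalIntegrable
  rw [← volterra_rlKernel_rlKernel hα hβ ht, ← volterra_const_mul]
  refine intervalIntegral.integral_mono_on_of_le_Ioo ht.le
    (intervalIntegrable_volterra (intervalIntegrable_rlKernel hα 0 t) ht.le hv) hint fun s hs => ?_
  exact mul_le_mul_of_nonneg_left (hvB s (Ioo_subset_Ioc_self hs)) (rlKernel_nonneg hα _)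

lemma nonpos_of_le_mul_volterra_rlKernel (hα : 0 < α) {M : ℝ} (hM : 0 ≤ M) {v : ℝ → ℝ}
    (hv : ContinuousOn v (Icc 0 T))
    (hle : ∀ t ∈ Icc 0 T, v t ≤ M * volterra (rlKernel α) v t) :
    ∀ t ∈ Icc 0 T, v t ≤ 0 := by
  obtain ⟨B, hB⟩ := isCompact_Icc.exists_bound_of_continuousOn hv
  have hiter (n : ℕ) : ∀ t ∈ Ioc 0 T, v t ≤ B * M ^ n * rlKernel (α * n + 1) t := by
    induction n with
    | zero =>
      intro t ht
      simpa [rlKernel_of_pos ht.1] using (le_abs_self _).trans (hB t (Ioc_subset_Icc_self ht))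
    | succ n ih =>
      intro t ht
      calc v t ≤ M * volterra (rlKernel α) v t := hle t (Ioc_subset_Icc_self ht)
        _ ≤ M * (B * M ^ n * rlKernel (α + (α * n + 1)) t) :=
          mul_le_mul_of_nonneg_left
            (volterra_rlKernel_le_of_le hα (by positivity) ht.1
              (hv.mono (Icc_subset_Icc_right ht.2)) fun s hs => ih s ⟨hs.1, hs.2.trans ht.2⟩) hM
        _ = B * M ^ (n + 1) * rlKernel (α * (n + 1 : ℕ) + 1) t := by
          push_cast
          ring_nf
  intro t ht
  rcases ht.1.eq_or_lt with rfl | ht₀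
  · simpa [volterra] using hle 0 ht
  · have hlim := (hasSum_mlKernel hα 1 M t).summable.tendsto_atTop_zero.const_mul B
    rw [mul_zero] at hlim
    exact ge_of_tendsto' hlim fun n => (hiter n t ⟨ht₀, ht.2⟩).trans_eq (mul_assoc _ _ _)

lemma nonneg_of_volterra_mul_le (hα : 0 < α) {k b u : ℝ → ℝ} {C : ℝ} (hC : 0 ≤ C)
    (hk : IntervalIntegrable k volume 0 T) (hk₀ : ∀ x ∈ Icc 0 T, 0 ≤ k x)
    (hkC : ∀ x ∈ Icc 0 T, k x ≤ C * rlKernel α x)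
    (hb : ContinuousOn b (Icc 0 T)) (hb₀ : ∀ s ∈ Icc 0 T, 0 ≤ b s)
    (hu : ContinuousOn u (Icc 0 T))
    (hle : ∀ t ∈ Icc 0 T, volterra k (fun s => b s * u s) t ≤ u t) :
    ∀ t ∈ Icc 0 T, 0 ≤ u t := by
  intro t₀ ht₀
  obtain ⟨B, hB⟩ := isCompact_Icc.exists_bound_of_continuousOn hb
  have hB₀ : 0 ≤ B := (norm_nonneg _).trans (hB t₀ ht₀)
  let v : ℝ → ℝ := fun s => max (-u s) 0
  have hv : ContinuousOn v (Icc 0 T) := hu.neg.sup continuousOn_const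
  have hv₀ (s : ℝ) : 0 ≤ v s := le_max_right _ _
  have hbuv (s : ℝ) (hs : s ∈ Icc 0 T) : b s * -u s ≤ B * v s :=
    (mul_le_mul_of_nonneg_left (le_max_left _ _) (hb₀ s hs)).trans
      (mul_le_mul_of_nonneg_right ((le_abs_self _).trans (hB s hs)) (hv₀ s))
  have hgronwall (t : ℝ) (ht : t ∈ Icc 0 T) : v t ≤ B * C * volterra (rlKernel α) v t := by
    have hsub : Icc 0 t ⊆ Icc 0 T := Icc_subset_Icc_right ht.2
    have hkt : IntervalIntegrable k volume 0 t :=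
      hk.mono_set (by rwa [uIcc_of_le ht.1, uIcc_of_le (ht.1.trans ht.2)])
    refine max_le ?_ (mul_nonneg (mul_nonneg hB₀ hC)
      (volterra_nonneg ht.1 (fun x _ => rlKernel_nonneg hα x) fun s _ => hv₀ s))
    calc -u t ≤ -volterra k (fun s => b s * u s) t := neg_le_neg (hle t ht)
      _ = volterra k (fun s => b s * -u s) t := by
        simp only [volterra, mul_neg, intervalIntegral.integral_neg]
      _ ≤ volterra k (fun s => B * v s) t :=
        volterra_le_volterra hkt ht.1 (fun x hx => hk₀ x (hsub hx)) ((hb.mul hu.neg).mono hsub)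
          ((hv.const_mul B).mono hsub) fun s hs => hbuv s (hsub hs)
      _ = B * volterra k v t := volterra_const_mul B k v t
      _ ≤ B * (C * volterra (rlKernel α) v t) :=
        mul_le_mul_of_nonneg_left (volterra_le_const_mul_volterra hkt
          (intervalIntegrable_rlKernel hα 0 t) ht.1 (fun x hx => hkC x (hsub hx)) (hv.mono hsub)
          fun s _ => hv₀ s) hB₀
      _ = B * C * volterra (rlKernel α) v t := (mul_assoc _ _ _).symm
  have hv_nonpos := nonpos_of_le_mul_volterra_rlKernel hα (mul_nonneg hB₀ hC) hv hgronwall t₀ ht₀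
  exact neg_nonpos.1 ((le_max_left _ _).trans hv_nonpos)

variable {m u₀ u₁ : ℝ} {a u : ℝ → ℝ}

lemma eq_homogeneousSolution_add_volterra_sub_mul (hα : 0 < α) (c : ℝ) {t : ℝ} (ht : t ∈ Icc 0 T)
    (ha : ContinuousOn a (Icc 0 T)) (hu : ContinuousOn u (Icc 0 T))
    (hsol : ∀ s ∈ Icc 0 T, u s = u₀ + u₁ * s + volterra (rlKernel α) (fun r => a r * u r) s) :
    u t = homogeneousSolution α c u₀ u₁ t
      + volterra (mlKernel α α c) (fun s => (a s - c) * u s) t := by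
  have hsub : Icc 0 t ⊆ Icc 0 T := Icc_subset_Icc_right ht.2
  refine eq_homogeneousSolution_add_volterra hα c ht.1 (hu.mono hsub)
    (((ha.sub continuousOn_const).mul hu).mono hsub) fun s hs => ?_
  simpa only [sub_mul, add_sub_cancel] using hsol s (hsub hs)

lemma nonneg_of_homogeneousSolution_nonneg (hα : 0 < α)
    (ha : ContinuousOn a (Icc 0 T)) (hma : ∀ t ∈ Icc 0 T, m ≤ a t)
    (hker : ∀ t ∈ Icc 0 T, 0 ≤ mlE α α (m * t ^ α))
    (hfree : ∀ t ∈ Icc 0 T, 0 ≤ homogeneousSolution α m u₀ u₁ t)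
    (hu : ContinuousOn u (Icc 0 T))
    (hsol : ∀ s ∈ Icc 0 T, u s = u₀ + u₁ * s + volterra (rlKernel α) (fun r => a r * u r) s) :
    ∀ t ∈ Icc 0 T, 0 ≤ u t := by
  obtain ⟨C, hC, hkC⟩ := exists_mlKernel_le hα hα m T
  refine nonneg_of_volterra_mul_le hα hC (intervalIntegrable_mlKernel hα hα m 0 T)
    (mlKernel_nonneg hker) hkC (ha.sub continuousOn_const)
    (fun s hs => sub_nonneg.2 (hma s hs)) hu fun t ht => ?_
  rw [eq_homogeneousSolution_add_volterra_sub_mul hα m ht ha hu hsol]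
  exact le_add_of_nonneg_left (hfree t ht)

lemma homogeneousSolution_le (hα : 0 < α) {c t : ℝ}
    (ha : ContinuousOn a (Icc 0 T)) (hma : ∀ t ∈ Icc 0 T, m ≤ a t)
    (hker : ∀ t ∈ Icc 0 T, 0 ≤ mlE α α (m * t ^ α))
    (hfree : ∀ t ∈ Icc 0 T, 0 ≤ homogeneousSolution α m u₀ u₁ t)
    (hu : ContinuousOn u (Icc 0 T))
    (hsol : ∀ s ∈ Icc 0 T, u s = u₀ + u₁ * s + volterra (rlKernel α) (fun r => a r * u r) s)
    (ht : t ∈ Icc 0 T) (hmc : m ≤ c) (hca : ∀ s ∈ Icc 0 t, c ≤ a s) :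
    homogeneousSolution α c u₀ u₁ t ≤ u t := by
  have hsub : Icc 0 t ⊆ Icc 0 T := Icc_subset_Icc_right ht.2
  have hu₀ := nonneg_of_homogeneousSolution_nonneg hα ha hma hker hfree hu hsol
  rw [eq_homogeneousSolution_add_volterra_sub_mul hα c ht ha hu hsol]
  exact le_add_of_nonneg_right <| volterra_nonneg ht.1
    (mlKernel_nonneg fun x hx => mlE_mul_rpow_nonneg_of_le hα hα hker hmc (hsub hx))
    fun s hs => mul_nonneg (sub_nonneg.2 (hca s hs)) (hu₀ s (hsub hs))

end Comparison

theorem linear_separation_lower_bound_general {α T m y₁₀ y₁₁ y₂₀ y₂₁ : ℝ} (hα : 0 < α)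
    {a alow y₁ y₂ : ℝ → ℝ}
    (ha : ContinuousOn a (Icc 0 T)) (hma : ∀ t ∈ Icc 0 T, m ≤ a t)
    (halow : ∀ t ∈ Icc 0 T, IsLeast (a '' Icc 0 t) (alow t))
    (hy₁cont : ContinuousOn y₁ (Icc 0 T)) (hy₂cont : ContinuousOn y₂ (Icc 0 T))
    (hy₁ : ∀ t ∈ Icc 0 T, y₁ t = y₁₀ + y₁₁ * t
      + 1 / Real.Gamma α * ∫ s in (0 : ℝ)..t, (t - s) ^ (α - 1) * (a s * y₁ s))
    (hy₂ : ∀ t ∈ Icc 0 T, y₂ t = y₂₀ + y₂₁ * t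
      + 1 / Real.Gamma α * ∫ s in (0 : ℝ)..t, (t - s) ^ (α - 1) * (a s * y₂ s))
    (hker : ∀ t ∈ Icc 0 T, 0 ≤ mlE α α (m * t ^ α))
    (hfree : ∀ t ∈ Icc 0 T,
      0 ≤ (y₂₀ - y₁₀) * mlE α 1 (m * t ^ α) + (y₂₁ - y₁₁) * (t * mlE α 2 (m * t ^ α))) :
    ∀ t ∈ Icc 0 T,
      (y₂₀ - y₁₀) * mlE α 1 (alow t * t ^ α) + (y₂₁ - y₁₁) * (t * mlE α 2 (alow t * t ^ α))
        ≤ y₂ t - y₁ t := by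
  have hsol (t : ℝ) (ht : t ∈ Icc 0 T) : y₂ t - y₁ t
      = (y₂₀ - y₁₀) + (y₂₁ - y₁₁) * t
        + volterra (rlKernel α) (fun s => a s * (y₂ s - y₁ s)) t := by
    have hsub : Icc 0 t ⊆ Icc 0 T := Icc_subset_Icc_right ht.2
    have hay₁ : ContinuousOn (fun s => a s * y₁ s) (Icc 0 t) := (ha.mul hy₁cont).mono hsub
    have hay₂ : ContinuousOn (fun s => a s * y₂ s) (Icc 0 t) := (ha.mul hy₂cont).mono hsub
    simp only [mul_sub]
    rw [volterra_sub (intervalIntegrable_rlKernel hα 0 t) ht.1 hay₂ hay₁, volterra_rlKernel ht.1,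
      volterra_rlKernel ht.1, hy₁ t ht, hy₂ t ht]
    ring
  intro t ht
  obtain ⟨τ, hτ, hτa⟩ := (halow t ht).1
  exact homogeneousSolution_le hα ha hma hker hfree (hy₂cont.sub hy₁cont) hsol ht
    (hτa ▸ hma τ (Icc_subset_Icc_right ht.2 hτ)) fun s hs => (halow t ht).2 (mem_image_of_mem a hs)

/-- Lower separation bound in the linear case `f(t,y) = a(t) y`
(lower estimate of Theorem 2.9 of the paper). -/
theorem linear_separation_lower_bound
    (α T Tstar L y₁₀ y₁₁ y₂₀ y₂₁ : ℝ) (hα₁ : 1 < α) (hα₂ : α < 2) (hT : 0 < T)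
    (a alow : ℝ → ℝ)
    (ha_cont : ContinuousOn a (Set.Icc 0 T))
    (hL : IsGreatest ((fun t => |a t|) '' Set.Icc 0 T) L)
    (halow : ∀ t ∈ Set.Icc (0 : ℝ) T, IsLeast (a '' Set.Icc 0 t) (alow t))
    (y₁ y₂ : ℝ → ℝ)
    (hy₁cont : ContinuousOn y₁ (Set.Icc 0 T)) (hy₂cont : ContinuousOn y₂ (Set.Icc 0 T))
    (hy₁ : ∀ t ∈ Set.Icc (0 : ℝ) T,
      y₁ t = y₁₀ + y₁₁ * t
        + (1 / Real.Gamma α) * ∫ s in (0 : ℝ)..t, (t - s) ^ (α - 1) * (a s * y₁ s))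
    (hy₂ : ∀ t ∈ Set.Icc (0 : ℝ) T,
      y₂ t = y₂₀ + y₂₁ * t
        + (1 / Real.Gamma α) * ∫ s in (0 : ℝ)..t, (t - s) ^ (α - 1) * (a s * y₂ s))
    (h0 : y₁₀ ≤ y₂₀) (h1 : y₁₁ ≤ y₂₁)
    (hTstar : 0 < Tstar) (hTstarT : Tstar ≤ T)
    (hcond : ∀ t ∈ Set.Icc (0 : ℝ) Tstar,
      mlE α α (-(L * t ^ α)) > 0 ∧
        ((y₂₀ - y₁₀) * mlE α 1 (-(L * t ^ α))
            + (y₂₁ - y₁₁) * t * mlE α 2 (-(L * t ^ α)) > 0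
          ∨ (y₁₀ = y₂₀ ∧ y₁₁ < y₂₁ ∧ mlE α 2 (-(L * t ^ α)) > 0))) :
    ∀ t ∈ Set.Icc (0 : ℝ) Tstar,
      |y₂ t - y₁ t| ≥ |y₂₀ - y₁₀| * mlE α 1 (alow t * t ^ α)
        + |y₂₁ - y₁₁| * (t * mlE α 2 (alow t * t ^ α)) := by
  have hsub : Icc 0 Tstar ⊆ Icc 0 T := Icc_subset_Icc_right hTstarT
  have hfree (t : ℝ) (ht : t ∈ Icc 0 Tstar) :
      0 ≤ (y₂₀ - y₁₀) * mlE α 1 (-L * t ^ α) + (y₂₁ - y₁₁) * (t * mlE α 2 (-L * t ^ α)) := by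
    rw [neg_mul, ← mul_assoc]
    rcases (hcond t ht).2 with hpos | ⟨h_eq, -, hE₂⟩
    · exact hpos.le
    · rw [h_eq, sub_self, zero_mul, zero_add]
      exact mul_nonneg (mul_nonneg (sub_nonneg.2 h1) ht.1) hE₂.le
  have hker (t : ℝ) (ht : t ∈ Icc 0 Tstar) : 0 ≤ mlE α α (-L * t ^ α) := by
    rw [neg_mul]
    exact (hcond t ht).1.le
  have hLa (t : ℝ) (ht : t ∈ Icc 0 Tstar) : -L ≤ a t :=
    neg_le_of_abs_le (hL.2 (mem_image_of_mem (fun t => |a t|) (hsub ht)))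
  intro t ht
  rw [abs_of_nonneg (sub_nonneg.2 h0), abs_of_nonneg (sub_nonneg.2 h1)]
  exact (linear_separation_lower_bound_general (m := -L) (zero_lt_one.trans hα₁)
    (ha_cont.mono hsub) hLa (fun s hs => halow s (hsub hs)) (hy₁cont.mono hsub)
    (hy₂cont.mono hsub) (fun s hs => hy₁ s (hsub hs)) (fun s hs => hy₂ s (hsub hs)) hker hfree
    t ht).trans (le_abs_self _)
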